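/- Let G = (U, V, E) be a bipartite graph with finite vertex sets, let α, β be positive integers, and let M₁ and M₂ be maximal bicliques of G. Then M₁ and M₂ are (α,β)-connected if and only if there is a finite sequence of maximal bicliques M₁ = N₁, N₂, …, Nₖ = M₂ such that Nᵢ and Nᵢ₊₁ are (α,β)-adjacent for every i = 1, …, k−1. (That is, connectivity witnessed by chains of arbitrary bicliques can always be witnessed by chains of maximal bicliques.) -/

import Mathlib

variable {U V : Type*} [DecidableEq U] [DecidableEq V]

/-- `(X, Y)` is a biclique of the bipartite graph with parts `U`, `V` and
edge relation `E`: every vertex of `X` is joined to every vertex of `Y`. -/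
def IsBiclique (E : U → V → Prop) (X : Finset U) (Y : Finset V) : Prop :=
  ∀ u ∈ X, ∀ v ∈ Y, E u v

/-- `(X, Y)` is a maximal biclique: it is a biclique and it is not strictly
contained in any other biclique. -/
def IsMaxBiclique (E : U → V → Prop) (X : Finset U) (Y : Finset V) : Prop :=
  IsBiclique E X Y ∧
    ∀ X' : Finset U, ∀ Y' : Finset V,
      IsBiclique E X' Y' → X ⊆ X' → Y ⊆ Y' → X = X' ∧ Y = Y'

/-- Two bicliques (given as pairs) are `(α,β)`-adjacent if they share at least
`α` vertices on the `U` side and at least `β` vertices on the `V` side. -/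
def BAdj (α β : ℕ) (B₁ B₂ : Finset U × Finset V) : Prop :=
  α ≤ (B₁.1 ∩ B₂.1).card ∧ β ≤ (B₁.2 ∩ B₂.2).card

/-- Two bicliques `B`, `B'` are `(α,β)`-connected if there is a finite sequence
of bicliques `B = B₁, B₂, …, Bₙ = B'` (with `n ≥ 2`) in which consecutive
bicliques are `(α,β)`-adjacent. -/
def BConnected (E : U → V → Prop) (α β : ℕ) (B B' : Finset U × Finset V) : Prop :=
  ∃ (n : ℕ) (c : ℕ → Finset U × Finset V),
    2 ≤ n ∧ c 0 = B ∧ c (n - 1) = B' ∧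
    (∀ i < n, IsBiclique E (c i).1 (c i).2) ∧
    (∀ i, i + 1 < n → BAdj α β (c i) (c (i + 1)))

/-- An `(α,β)`-biclique percolation community: a set `C` of maximal bicliques
such that any two (distinct) members are `(α,β)`-connected, and `C` is maximal
with this property. -/
def IsBCPC (E : U → V → Prop) (α β : ℕ) (C : Set (Finset U × Finset V)) : Prop :=
  (∀ B ∈ C, IsMaxBiclique E B.1 B.2) ∧
  (∀ B₁ ∈ C, ∀ B₂ ∈ C, B₁ ≠ B₂ → BConnected E α β B₁ B₂) ∧
  ∀ C' : Set (Finset U × Finset V),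
    (∀ B ∈ C', IsMaxBiclique E B.1 B.2) →
    (∀ B₁ ∈ C', ∀ B₂ ∈ C', B₁ ≠ B₂ → BConnected E α β B₁ B₂) →
    C ⊆ C' → C = C'

/-!
Replace every member of a chain of bicliques by a maximal biclique containing it. Overlaps only
grow, so consecutive members stay adjacent, and the two ends, being maximal, do not move. Every
member of a chain has at least `α` vertices in `U` and at least `β` in `V`, so a maximal extension
exists as soon as `α` vertices of `U`, and likewise `β` vertices of `V`, never have infinitely many
common neighbours.
-/

section Maximal

omit [DecidableEq U] [DecidableEq V]

theorem isMaxBiclique_iff_maximal {E : U → V → Prop} {M : Finset U × Finset V} :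
    IsMaxBiclique E M.1 M.2 ↔
      Maximal (fun B : Finset U × Finset V ↦ IsBiclique E B.1 B.2) M := by
  refine and_congr_right fun _ ↦ ⟨fun h B hB hMB ↦ ?_, fun h X Y hXY hX hY ↦ ?_⟩
  · obtain ⟨hX, hY⟩ := h B.1 B.2 hB hMB.1 hMB.2
    exact ⟨hX.ge, hY.ge⟩
  · have hle : (X, Y) ≤ M := h hXY ⟨hX, hY⟩
    exact ⟨hX.antisymm hle.1, hY.antisymm hle.2⟩

namespace IsBiclique

theorem finite_setOf_ge {E : U → V → Prop} {B : Finset U × Finset V}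
    (hU : (upperPolar E (B.1 : Set U)).Finite) (hV : (lowerPolar E (B.2 : Set V)).Finite) :
    {M : Finset U × Finset V | IsBiclique E M.1 M.2 ∧ B ≤ M}.Finite := by
  classical
  refine (Set.finite_Iic (hV.toFinset, hU.toFinset)).subset ?_
  rintro M ⟨hM, hX, hY⟩
  refine ⟨fun u hu ↦ hV.mem_toFinset.2 fun v hv ↦ ?_, fun v hv ↦ hU.mem_toFinset.2 fun u hu ↦ ?_⟩
  · exact hM u hu v (hY hv)
  · exact hM u (hX hu) v hv

theorem exists_le_isMaxBiclique {E : U → V → Prop} {B : Finset U × Finset V}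
    (hB : IsBiclique E B.1 B.2)
    (hU : (upperPolar E (B.1 : Set U)).Finite) (hV : (lowerPolar E (B.2 : Set V)).Finite) :
    ∃ M : Finset U × Finset V, IsMaxBiclique E M.1 M.2 ∧ B ≤ M := by
  obtain ⟨M, hBM, hM⟩ := (finite_setOf_ge hU hV).exists_le_maximal ⟨hB, le_rfl⟩
  refine ⟨M, isMaxBiclique_iff_maximal.2 ⟨hM.prop.1, fun B' hB' hMB' ↦ ?_⟩, hBM⟩
  exact hM.le_of_ge ⟨hB', hBM.trans hMB'⟩ hMB'

end IsBiclique

end Maximal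

namespace BAdj

variable {α β : ℕ} {B₁ B₂ M₁ M₂ : Finset U × Finset V}

theorem mono (h : BAdj α β B₁ B₂) (h₁ : B₁ ≤ M₁) (h₂ : B₂ ≤ M₂) : BAdj α β M₁ M₂ :=
  ⟨h.1.trans (Finset.card_le_card (Finset.inter_subset_inter h₁.1 h₂.1)),
    h.2.trans (Finset.card_le_card (Finset.inter_subset_inter h₁.2 h₂.2))⟩

theorem le_card_left (h : BAdj α β B₁ B₂) : α ≤ B₁.1.card ∧ β ≤ B₁.2.card :=
  ⟨h.1.trans (Finset.card_le_card Finset.inter_subset_left),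
    h.2.trans (Finset.card_le_card Finset.inter_subset_left)⟩

theorem le_card_right (h : BAdj α β B₁ B₂) : α ≤ B₂.1.card ∧ β ≤ B₂.2.card :=
  ⟨h.1.trans (Finset.card_le_card Finset.inter_subset_right),
    h.2.trans (Finset.card_le_card Finset.inter_subset_right)⟩

theorem le_card_of_chain {n : ℕ} {c : ℕ → Finset U × Finset V} (hn : 2 ≤ n)
    (hadj : ∀ i, i + 1 < n → BAdj α β (c i) (c (i + 1))) {i : ℕ} (hi : i < n) :
    α ≤ (c i).1.card ∧ β ≤ (c i).2.card := by
  cases i with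
  | zero => exact (hadj 0 hn).le_card_left
  | succ j => exact (hadj j hi).le_card_right

end BAdj

theorem stmt10_general (E : U → V → Prop) (α β : ℕ)
    (hU : ∀ X : Finset U, α ≤ X.card → (upperPolar E (X : Set U)).Finite)
    (hV : ∀ Y : Finset V, β ≤ Y.card → (lowerPolar E (Y : Set V)).Finite)
    (M₁ M₂ : Finset U × Finset V)
    (h₁ : IsMaxBiclique E M₁.1 M₁.2) (h₂ : IsMaxBiclique E M₂.1 M₂.2) :
    BConnected E α β M₁ M₂ ↔
      ∃ (k : ℕ) (c : ℕ → Finset U × Finset V),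
        2 ≤ k ∧ c 0 = M₁ ∧ c (k - 1) = M₂ ∧
        (∀ i < k, IsMaxBiclique E (c i).1 (c i).2) ∧
        (∀ i, i + 1 < k → BAdj α β (c i) (c (i + 1))) := by
  constructor
  · rintro ⟨n, c, hn, rfl, rfl, hc, hadj⟩
    have hext : ∀ i < n, ∃ M : Finset U × Finset V, IsMaxBiclique E M.1 M.2 ∧ c i ≤ M := by
      intro i hi
      obtain ⟨hX, hY⟩ := BAdj.le_card_of_chain hn hadj hi
      exact (hc i hi).exists_le_isMaxBiclique (hU _ hX) (hV _ hY)
    choose! d hd hcd using hext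
    have hfix : ∀ i < n, IsMaxBiclique E (c i).1 (c i).2 → d i = c i := fun i hi hM ↦
      ((isMaxBiclique_iff_maximal.1 hM).eq_of_le (hd i hi).1 (hcd i hi)).symm
    refine ⟨n, d, hn, hfix 0 (by lia) h₁, hfix (n - 1) (by lia) h₂, hd, fun i hi ↦ ?_⟩
    exact (hadj i hi).mono (hcd i (by lia)) (hcd (i + 1) hi)
  · rintro ⟨k, c, hk, hfirst, hlast, hc, hadj⟩
    exact ⟨k, c, hk, hfirst, hlast, fun i hi ↦ (hc i hi).1, hadj⟩

theorem stmt10 [Fintype U] [Fintype V] (E : U → V → Prop) (α β : ℕ)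
    (hα : 0 < α) (hβ : 0 < β) (M₁ M₂ : Finset U × Finset V)
    (h₁ : IsMaxBiclique E M₁.1 M₁.2) (h₂ : IsMaxBiclique E M₂.1 M₂.2) :
    BConnected E α β M₁ M₂ ↔
      ∃ (k : ℕ) (c : ℕ → Finset U × Finset V),
        2 ≤ k ∧ c 0 = M₁ ∧ c (k - 1) = M₂ ∧
        (∀ i < k, IsMaxBiclique E (c i).1 (c i).2) ∧
        (∀ i, i + 1 < k → BAdj α β (c i) (c (i + 1))) := by
  exact stmt10_general E α β (fun _ _ ↦ Set.toFinite _) (fun _ _ ↦ Set.toFinite _) M₁ M₂ h₁ h₂
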